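/- arXiv:1508.05442 — 2 statements merged into one kernel-verified Lean document; each statement's English description precedes it below -/
import Mathlib

section
/- Let k ∈ ℕ and set l := 4k − 1. Let P be a polynomial with real coefficients of degree < l and let μ be a finite positive Borel measure on [−1, 1]. Let A, B be bounded self-adjoint operators on H with the spectrum of A contained in (−1, 1) and B positive semidefinite, and set X := A + iB. Then for every λ ∈ [−1, 1] the operators I − λX and I − λ(A + tB) (for real t near 0) are invertible, the Bochner integrals defining f(Y) := P(Y) + ∫_{[−1,1]} Y^{l} (I − λY)^{-1} dμ(λ) exist for Y = X and Y = A + tB, and Im f(X) ≤ Σ_{m=1}^{2k−1} ((−1)^{m−1} / (2m−1)!) · D^{2m−1}f(A;B), where D^{m}f(A;B) denotes the m-th derivative at t = 0 of the map t ↦ f(A + tB). -/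
open ContinuousLinearMap MeasureTheory

variable {H : Type*} [NormedAddCommGroup H] [InnerProductSpace ℂ H] [CompleteSpace H]

/-- The imaginary part `(Y - Y*)/(2i)` of a bounded operator. -/
noncomputable def opIm (Y : H →L[ℂ] H) : H →L[ℂ] H := (2 * Complex.I)⁻¹ • (Y - star Y)

/-- The operator function `Y ↦ P(Y) + ∫_{[−1,1]} Y^l (I − λY)⁻¹ dμ(λ)`, the integral
representation of an operator `l`-tone function on `(−1,1)`. -/
noncomputable def fcal (P : Polynomial ℝ) (μ : Measure ℝ) (l : ℕ) (Y : H →L[ℂ] H) :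
    H →L[ℂ] H :=
  Polynomial.aeval Y (P.map Complex.ofRealHom) +
    ∫ s, Y ^ l * Ring.inverse (1 - (s : ℂ) • Y) ∂μ

/-!
Iterating the second resolvent identity turns `f(a + zb)` into a polynomial of degree `< l` in `z`
plus the exact remainder `zˡ ∫ (R b)ˡ W_z dμ`, where `R = (1 - λa)⁻¹` and
`W_z = (1 - λ(a + zb))⁻¹`. For real `z` near `0` this is a Taylor expansion, so the polynomial is
the Taylor polynomial of `t ↦ f(a + tb)` and its coefficients are self-adjoint; but the identity
holds at `z = i` too. There the imaginary part of the polynomial is the alternating sum of odd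
derivatives, and since `i^(4k-1) = -i` the remainder contributes minus a real part. As
`W_i b R = R b W_i`, the real part of `(R b)^(2n+1) W_i` is `V b V*` with `V = (R b)ⁿ W_i`, which is
nonnegative.
-/

open Filter Polynomial Set Topology ComplexStarModule
open scoped Ring

theorem commute_ringInverse_right {M₀ : Type*} [MonoidWithZero M₀] {x u : M₀} (h : Commute x u) :
    Commute x u⁻¹ʳ := by
  by_cases hu : IsUnit u
  · obtain ⟨v, rfl⟩ := hu
    rw [Ring.inverse_unit]
    exact h.units_inv_right
  · rw [Ring.inverse_non_unit _ hu]
    exact Commute.zero_right x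

section Algebra

variable {R E : Type*} [CommRing R] [Ring E] [Algebra R E]

/-- Evaluation at a scalar of a polynomial with coefficients in a possibly noncommutative algebra.
Scalars being central, it is multiplicative. -/
noncomputable def evalScalar (z : R) : E[X] →ₐ[R] E :=
  { eval₂RingHom' (RingHom.id E) (algebraMap R E z) fun c => (Algebra.commutes z c).symm with
    commutes' := fun _ => eval₂_C _ _ }

/-- The polynomial `a + X b`, whose values at scalars trace out the line through `a` in the
direction `b`. -/
noncomputable def affineLine (a b : E) : E[X] := C b * X + C a

@[simp] theorem evalScalar_C (z : R) (c : E) : evalScalar z (C c) = c :=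
  eval₂_C _ _

@[simp] theorem evalScalar_X (z : R) : evalScalar z (X : E[X]) = algebraMap R E z :=
  eval₂_X _ _

@[simp] theorem evalScalar_affineLine (z : R) (a b : E) :
    evalScalar z (affineLine a b) = a + z • b := by
  rw [affineLine, map_add, map_mul, evalScalar_C, evalScalar_C, evalScalar_X,
    ← Algebra.commutes, ← Algebra.smul_def, add_comm]

theorem evalScalar_eq_sum_range {p : E[X]} {n : ℕ} (hp : p ∈ degreeLT E n) (z : R) :
    evalScalar z p = ∑ j ∈ Finset.range n, z ^ j • p.coeff j := by
  have hsupp : p.support ⊆ Finset.range n := fun j hj =>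
    Finset.mem_range.2 (mod_cast (le_degree_of_mem_supp j hj).trans_lt (mem_degreeLT.1 hp))
  calc evalScalar z p = p.sum fun j c => c * algebraMap R E z ^ j := eval₂_eq_sum
    _ = ∑ j ∈ Finset.range n, p.coeff j * algebraMap R E z ^ j :=
      sum_eq_of_subset _ (fun _ => zero_mul _) hsupp
    _ = ∑ j ∈ Finset.range n, z ^ j • p.coeff j := by
      simp only [Algebra.smul_def, ← map_pow, Algebra.commutes]

theorem affineLine_pow_mem_degreeLT (a b : E) {m n : ℕ} (h : m < n) :
    affineLine a b ^ m ∈ degreeLT E n := by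
  rw [mem_degreeLT]
  exact (degree_pow_le_of_le m degree_linear_le).trans_lt (by simpa using mod_cast h)

theorem aeval_affineLine_mem_degreeLT (a b : E) {P : R[X]} {n : ℕ} (hP : P.degree < n) :
    aeval (affineLine a b) P ∈ degreeLT E n := by
  rw [aeval_def, eval₂_eq_sum]
  refine sum_mem fun i hi => ?_
  change algebraMap R E[X] (P.coeff i) * affineLine a b ^ i ∈ _
  rw [Polynomial.algebraMap_apply, ← smul_eq_C_mul]
  exact Submodule.smul_mem _ _ (affineLine_pow_mem_degreeLT a b
    (mod_cast (le_degree_of_mem_supp i hi).trans_lt hP))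

theorem X_mul_mem_degreeLT_succ {p : E[X]} {n : ℕ} (hp : p ∈ degreeLT E n) :
    X * p ∈ degreeLT E (n + 1) := by
  rw [mem_degreeLT, degree_lt_iff_coeff_zero] at *
  rintro (_ | m) hm
  · omega
  · rw [coeff_X_mul, hp m (by omega)]

theorem aeval_add_smul_eq_evalScalar (a b : E) (P : R[X]) (z : R) :
    aeval (a + z • b) P = evalScalar z (aeval (affineLine a b) P) := by
  rw [← aeval_algHom_apply, evalScalar_affineLine]

variable {Λ a y : E}

theorem mul_ringInverse_one_sub_mul (hΛ : Commute Λ a) (ha : IsUnit (1 - Λ * a))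
    (hy : IsUnit (1 - Λ * y)) :
    y * (1 - Λ * y)⁻¹ʳ =
      (1 - Λ * a)⁻¹ʳ * a + (1 - Λ * a)⁻¹ʳ * (y - a) * (1 - Λ * y)⁻¹ʳ := by
  have h : (1 - Λ * a) * y = a * (1 - Λ * y) + (y - a) := by
    rw [hΛ.eq]
    noncomm_ring
  calc y * (1 - Λ * y)⁻¹ʳ
      = (1 - Λ * a)⁻¹ʳ * ((1 - Λ * a) * y) * (1 - Λ * y)⁻¹ʳ := by
        rw [Ring.inverse_mul_cancel_left _ _ ha]
    _ = (1 - Λ * a)⁻¹ʳ * a * ((1 - Λ * y) * (1 - Λ * y)⁻¹ʳ) +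
          (1 - Λ * a)⁻¹ʳ * (y - a) * (1 - Λ * y)⁻¹ʳ := by
        rw [h]
        noncomm_ring
    _ = _ := by rw [Ring.mul_inverse_cancel _ hy, mul_one]

theorem exists_evalScalar_add_remainder (hΛ : ∀ x, Commute Λ x) (ha : IsUnit (1 - Λ * a)) (b : E)
    (n : ℕ) : ∃ p ∈ degreeLT E n, ∀ z : R, IsUnit (1 - Λ * (a + z • b)) →
      (a + z • b) ^ n * (1 - Λ * (a + z • b))⁻¹ʳ =
        evalScalar z p + z ^ n • (((1 - Λ * a)⁻¹ʳ * b) ^ n * (1 - Λ * (a + z • b))⁻¹ʳ) := by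
  induction n with
  | zero => exact ⟨0, zero_mem _, fun z _ => by simp⟩
  | succ n ih =>
    obtain ⟨p, hp, hpz⟩ := ih
    set u := (1 - Λ * a)⁻¹ʳ
    refine ⟨C (u * a) * affineLine a b ^ n + C (u * b) * X * p, ?_, fun z hz => ?_⟩
    · rw [mul_assoc, ← smul_eq_C_mul, ← smul_eq_C_mul]
      refine add_mem (Submodule.smul_mem _ _ (affineLine_pow_mem_degreeLT a b n.lt_succ_self))
        (Submodule.smul_mem _ _ ?_)
      exact X_mul_mem_degreeLT_succ hp
    set y := a + z • b with hy
    set v := (1 - Λ * y)⁻¹ʳ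
    have hyv : Commute (y ^ n) v := by
      refine commute_ringInverse_right (.pow_left ?_ n)
      exact (Commute.one_right y).sub_right ((hΛ y).symm.mul_right (.refl y))
    calc y ^ (n + 1) * v = y * v * y ^ n := by rw [pow_succ', mul_assoc, hyv.eq, mul_assoc]
      _ = (u * a + z • (u * b * v)) * y ^ n := by
        rw [mul_ringInverse_one_sub_mul (hΛ a) ha hz, hy, add_sub_cancel_left, mul_smul_comm,
          smul_mul_assoc]
      _ = u * a * y ^ n + z • (u * b * (y ^ n * v)) := by
        rw [add_mul, smul_mul_assoc, mul_assoc (u * b), ← hyv.eq]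
      _ = _ := by
        rw [hpz z hz]
        simp only [map_add, map_mul, map_pow, evalScalar_C, evalScalar_X, evalScalar_affineLine]
        rw [← Algebra.commutes, ← Algebra.smul_def, smul_mul_assoc, mul_add, smul_add, add_assoc,
          pow_succ', pow_succ', mul_smul_comm, smul_smul, mul_assoc (u * b)]

end Algebra

section Taylor

variable {F : Type*} [NormedAddCommGroup F] [NormedSpace ℝ F]

theorem isSelfAdjoint_iteratedDeriv [StarAddMonoid F] [StarModule ℝ F] [ContinuousStar F]
    {f : ℝ → F} (hf : ∀ t, IsSelfAdjoint (f t)) (n : ℕ) (t : ℝ) :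
    IsSelfAdjoint (iteratedDeriv n f t) := by
  induction n generalizing t with
  | zero => simpa using hf t
  | succ n ih =>
    rw [iteratedDeriv_succ, isSelfAdjoint_iff, ← deriv.star]
    simp only [(ih _).star_eq]

variable [CompleteSpace F]

theorem iteratedDeriv_pow_smul_zero {m l : ℕ} (hm : m < l) {ρ : ℝ → F} (hρ : AnalyticAt ℝ ρ 0) :
    iteratedDeriv m (fun t : ℝ => t ^ l • ρ t) 0 = 0 := by
  have han : AnalyticAt ℝ (fun t : ℝ => t ^ l • ρ t) 0 := by fun_prop
  refine (natCast_le_analyticOrderAt_iff_iteratedDeriv_eq_zero han).1 ?_ m hm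
  exact (natCast_le_analyticOrderAt han).2 ⟨ρ, hρ, by simp⟩

theorem iteratedDeriv_eq_of_taylor_expansion {l : ℕ} {f ρ : ℝ → F} {c : ℕ → F}
    (hρ : AnalyticAt ℝ ρ 0)
    (hf : f =ᶠ[𝓝 0] fun t => ∑ j ∈ Finset.range l, t ^ j • c j + t ^ l • ρ t) {m : ℕ} (hm : m < l) :
    iteratedDeriv m f 0 = (m.factorial : ℝ) • c m := by
  have hsum : ContDiffAt ℝ m (fun t : ℝ => ∑ j ∈ Finset.range l, t ^ j • c j) 0 := by fun_prop
  have hrem : ContDiffAt ℝ m (fun t : ℝ => t ^ l • ρ t) 0 := by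
    have := hρ.contDiffAt (n := m)
    fun_prop
  rw [hf.iteratedDeriv_eq, iteratedDeriv_fun_add hsum hrem, iteratedDeriv_pow_smul_zero hm hρ,
    add_zero]
  simp (disch := fun_prop) only [iteratedDeriv_fun_sum, iteratedDeriv_smul_const,
    iteratedDeriv_fun_pow_zero]
  simp [hm]

end Taylor

section ContinuousMap

variable {K E : Type*} [TopologicalSpace K] [CompactSpace K] [MeasurableSpace K]
  [OpensMeasurableSpace K] [NormedAddCommGroup E]

theorem integrable_continuousMap (ν : Measure K) [IsFiniteMeasure ν] (φ : C(K, E)) :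
    Integrable φ ν :=
  φ.continuous.integrable_of_hasCompactSupport (.of_compactSpace _)

variable (𝕜 : Type*) [RCLike 𝕜] [NormedSpace ℝ E] [NormedSpace 𝕜 E]

/-- The Bochner integral against a finite measure, as a continuous linear map on continuous
functions. -/
noncomputable def integralCLM (ν : Measure K) [IsFiniteMeasure ν] : C(K, E) →L[𝕜] E :=
  LinearMap.mkContinuous
    { toFun φ := ∫ s, φ s ∂ν
      map_add' φ ψ := integral_add (integrable_continuousMap ν φ) (integrable_continuousMap ν ψ)
      map_smul' c φ := integral_smul c φ }
    (ν.real univ) fun φ => by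
      rw [mul_comm]
      exact norm_integral_le_of_norm_le_const (.of_forall φ.norm_coe_le_norm)

@[simp]
theorem integralCLM_apply (ν : Measure K) [IsFiniteMeasure ν] (φ : C(K, E)) :
    integralCLM 𝕜 ν φ = ∫ s, φ s ∂ν :=
  rfl

end ContinuousMap

theorem ringInverse_continuousMap_apply {K E : Type*} [TopologicalSpace K] [NormedRing E]
    {φ : C(K, E)} (h : IsUnit φ) (s : K) : φ⁻¹ʳ s = (φ s)⁻¹ʳ := by
  obtain ⟨u, rfl⟩ := h
  rw [Ring.inverse_unit]
  exact (Ring.inverse_unit (ContinuousMap.unitsLift.symm u s)).symm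

section ToneDomain

variable {E : Type*} [NormedRing E] [NormedAlgebra ℂ E]

variable (E) in
/-- The elements `y` with `1 - s y` invertible for all `s ∈ [-1, 1]`: those at which every integrand
`yˡ (1 - s y)⁻¹` of the integral representation is free of junk values. -/
def toneDomain : Set E := {y | ∀ s ∈ Icc (-1 : ℝ) 1, IsUnit (1 - (s : ℂ) • y)}

variable (E) in
/-- The function `s ↦ s • 1` on `[-1, 1]`. With it the family `(1 - s y)⁻¹` becomes a single inverse
in the Banach algebra of continuous functions on `[-1, 1]`, which gives continuity in `s` and
analyticity in `y` at once. -/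
noncomputable def intervalParam : C(Icc (-1 : ℝ) 1, E) := ⟨fun s => (s : ℂ) • 1, by fun_prop⟩

theorem commute_intervalParam (φ : C(Icc (-1 : ℝ) 1, E)) : Commute (intervalParam E) φ := by
  ext s
  simp [intervalParam]

theorem one_sub_intervalParam_mul_const_apply (y : E) (s : Icc (-1 : ℝ) 1) :
    (1 - intervalParam E * .const _ y) s = 1 - (s : ℂ) • y := by
  simp [intervalParam]

variable [CompleteSpace E]

theorem isUnit_one_sub_intervalParam_mul_const_iff {y : E} :
    IsUnit (1 - intervalParam E * .const _ y) ↔ y ∈ toneDomain E := by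
  simp only [ContinuousMap.isUnit_iff_forall_isUnit, one_sub_intervalParam_mul_const_apply,
    Subtype.forall, toneDomain, mem_ofPred_eq]

theorem eventually_mem_toneDomain {a : E} (ha : a ∈ toneDomain E) (b : E) :
    ∀ᶠ t : ℝ in 𝓝 0, a + t • b ∈ toneDomain E := by
  simp only [← isUnit_one_sub_intervalParam_mul_const_iff] at *
  have hcont : Continuous fun t : ℝ => 1 - intervalParam E * .const _ (a + t • b) :=
    continuous_const.sub
      (continuous_const.mul (ContinuousMap.continuous_const'.comp (by fun_prop)))
  refine hcont.continuousAt.eventually (p := IsUnit) (Units.isOpen.mem_nhds ?_)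
  simpa using ha

end ToneDomain

section IntegralIcc

theorem restrict_eq_self_of_measure_compl_eq_zero {α : Type*} [MeasurableSpace α] {μ : Measure α}
    {t : Set α} (h : μ tᶜ = 0) : μ.restrict t = μ :=
  Measure.restrict_eq_self_of_ae_mem (mem_ae_iff.2 h)

variable {E : Type*} [NormedAddCommGroup E] {μ : Measure ℝ}

theorem integrable_of_continuousMap_Icc [IsFiniteMeasure μ] (hμ : μ (Icc (-1 : ℝ) 1)ᶜ = 0)
    {f : ℝ → E} {φ : C(Icc (-1 : ℝ) 1, E)} (hf : ∀ s, φ s = f s) : Integrable f μ := by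
  have hint : IntegrableOn f (Icc (-1) 1) μ :=
    (integrableOn_iff_comap_subtypeVal measurableSet_Icc).2
      ((integrable_continuousMap _ φ).congr (.of_forall hf))
  rwa [IntegrableOn, restrict_eq_self_of_measure_compl_eq_zero hμ] at hint

theorem integral_eq_integralCLM_Icc (𝕜 : Type*) [RCLike 𝕜] [NormedSpace ℝ E] [NormedSpace 𝕜 E]
    [IsFiniteMeasure μ] (hμ : μ (Icc (-1 : ℝ) 1)ᶜ = 0)
    {f : ℝ → E} {φ : C(Icc (-1 : ℝ) 1, E)} (hf : ∀ s, φ s = f s) :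
    ∫ s, f s ∂μ = integralCLM 𝕜 (μ.comap Subtype.val) φ := by
  calc ∫ s, f s ∂μ = ∫ s in Icc (-1) 1, f s ∂μ := by
        rw [restrict_eq_self_of_measure_compl_eq_zero hμ]
    _ = ∫ s : Icc (-1 : ℝ) 1, f s ∂μ.comap Subtype.val :=
        (integral_subtype_comap measurableSet_Icc f).symm
    _ = integralCLM 𝕜 (μ.comap Subtype.val) φ := by simp only [integralCLM_apply, hf]

end IntegralIcc

section ToneFunction

variable {E : Type*} [NormedRing E] [NormedAlgebra ℂ E] {μ : Measure ℝ}

/-- The integral representation `P(y) + ∫ yˡ (1 - s y)⁻¹ dμ(s)` of an operator `l`-tone function. -/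
noncomputable def toneFunction (P : ℝ[X]) (μ : Measure ℝ) (l : ℕ) (y : E) : E :=
  aeval y (P.map Complex.ofRealHom) + ∫ s, y ^ l * (1 - (s : ℂ) • y)⁻¹ʳ ∂μ

/-- The remainder `∫ ((1 - s a)⁻¹ b)ˡ (1 - s y)⁻¹ dμ(s)` in the Taylor formula of order `l` for
`toneFunction` at `a` in the direction `b`, without the scalar factor `zˡ` at `y = a + z b`. -/
noncomputable def toneRemainder (μ : Measure ℝ) (l : ℕ) (a b y : E) : E :=
  ∫ s, ((1 - (s : ℂ) • a)⁻¹ʳ * b) ^ l * (1 - (s : ℂ) • y)⁻¹ʳ ∂μ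

variable [IsFiniteMeasure μ] [CompleteSpace E] {a b y : E}

theorem ringInverse_one_sub_intervalParam_mul_const_apply (hy : y ∈ toneDomain E)
    (s : Icc (-1 : ℝ) 1) :
    (1 - intervalParam E * .const _ y)⁻¹ʳ s = (1 - (s : ℂ) • y)⁻¹ʳ := by
  rw [ringInverse_continuousMap_apply (isUnit_one_sub_intervalParam_mul_const_iff.2 hy),
    one_sub_intervalParam_mul_const_apply]

theorem toneFunction_eq_integralCLM (hμ : μ (Icc (-1 : ℝ) 1)ᶜ = 0) (P : ℝ[X]) (l : ℕ)
    (hy : y ∈ toneDomain E) :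
    toneFunction P μ l y = aeval y (P.map Complex.ofRealHom) + integralCLM ℂ (μ.comap Subtype.val)
        (.const _ y ^ l * (1 - intervalParam E * .const _ y)⁻¹ʳ) := by
  rw [toneFunction, integral_eq_integralCLM_Icc ℂ hμ fun s => ?_]
  simp [ringInverse_one_sub_intervalParam_mul_const_apply hy]

theorem integrable_pow_mul_ringInverse (hμ : μ (Icc (-1 : ℝ) 1)ᶜ = 0) (l : ℕ)
    (hy : y ∈ toneDomain E) :
    Integrable (fun s : ℝ => y ^ l * (1 - (s : ℂ) • y)⁻¹ʳ) μ :=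
  integrable_of_continuousMap_Icc hμ
    (φ := .const _ y ^ l * (1 - intervalParam E * .const _ y)⁻¹ʳ)
    fun s => by simp [ringInverse_one_sub_intervalParam_mul_const_apply hy]

theorem integrable_ringInverse_mul_pow_mul_ringInverse (hμ : μ (Icc (-1 : ℝ) 1)ᶜ = 0) (l : ℕ)
    (ha : a ∈ toneDomain E) (b : E) (hy : y ∈ toneDomain E) :
    Integrable (fun s : ℝ => ((1 - (s : ℂ) • a)⁻¹ʳ * b) ^ l * (1 - (s : ℂ) • y)⁻¹ʳ) μ :=
  integrable_of_continuousMap_Icc hμ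
    (φ := ((1 - intervalParam E * .const _ a)⁻¹ʳ * .const _ b) ^ l *
      (1 - intervalParam E * .const _ y)⁻¹ʳ)
    fun s => by
      simp [ringInverse_one_sub_intervalParam_mul_const_apply ha,
        ringInverse_one_sub_intervalParam_mul_const_apply hy]

theorem toneRemainder_eq_integralCLM (hμ : μ (Icc (-1 : ℝ) 1)ᶜ = 0) (l : ℕ)
    (ha : a ∈ toneDomain E) (b : E) (hy : y ∈ toneDomain E) :
    toneRemainder μ l a b y = integralCLM ℂ (μ.comap Subtype.val)
      (((1 - intervalParam E * .const _ a)⁻¹ʳ * .const _ b) ^ l *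
        (1 - intervalParam E * .const _ y)⁻¹ʳ) :=
  integral_eq_integralCLM_Icc ℂ hμ fun s => by
    simp [ringInverse_one_sub_intervalParam_mul_const_apply ha,
      ringInverse_one_sub_intervalParam_mul_const_apply hy]

theorem analyticAt_toneRemainder (hμ : μ (Icc (-1 : ℝ) 1)ᶜ = 0) (l : ℕ)
    (ha : a ∈ toneDomain E) (b : E) :
    AnalyticAt ℝ (fun t : ℝ => toneRemainder μ l a b (a + t • b)) 0 := by
  have hline : AnalyticAt ℝ
      (fun t : ℝ => 1 - intervalParam E * (.const _ a + t • .const _ b)) 0 := by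
    fun_prop
  have hinv : AnalyticAt ℝ
      (fun t : ℝ => (1 - intervalParam E * (.const _ a + t • .const _ b))⁻¹ʳ) 0 :=
    (analyticAt_inverse (isUnit_one_sub_intervalParam_mul_const_iff.2 ha).unit).comp_of_eq
      hline (by ext s; simp)
  have hprod : AnalyticAt ℝ (fun t : ℝ =>
      ((1 - intervalParam E * .const _ a)⁻¹ʳ * .const _ b) ^ l *
        (1 - intervalParam E * (.const _ a + t • .const _ b))⁻¹ʳ) 0 :=
    analyticAt_const.mul hinv
  have hL := (((integralCLM ℂ (μ.comap Subtype.val)).restrictScalars ℝ).analyticAt _).comp hprod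
  refine hL.congr ?_
  filter_upwards [eventually_mem_toneDomain ha b] with t ht
  exact (toneRemainder_eq_integralCLM hμ l ha b ht).symm

theorem exists_toneFunction_expansion (hμ : μ (Icc (-1 : ℝ) 1)ᶜ = 0) {P : ℝ[X]} {l : ℕ}
    (hP : P.degree < l) (ha : a ∈ toneDomain E) (b : E) :
    ∃ c : ℕ → E, ∀ z : ℂ, a + z • b ∈ toneDomain E →
      toneFunction P μ l (a + z • b) =
        ∑ j ∈ Finset.range l, z ^ j • c j + z ^ l • toneRemainder μ l a b (a + z • b) := by
  obtain ⟨p, hp, hpz⟩ := exists_evalScalar_add_remainder (R := ℂ) commute_intervalParam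
    (isUnit_one_sub_intervalParam_mul_const_iff.2 ha) (.const _ b) l
  set q := aeval (affineLine a b) (P.map Complex.ofRealHom)
  have hq : q ∈ degreeLT E l := aeval_affineLine_mem_degreeLT a b (degree_map_le.trans_lt hP)
  refine ⟨fun j => q.coeff j + integralCLM ℂ (μ.comap Subtype.val) (p.coeff j), fun z hz => ?_⟩
  have hline : ContinuousMap.const (Icc (-1 : ℝ) 1) (a + z • b) = .const _ a + z • .const _ b := rfl
  rw [toneFunction_eq_integralCLM hμ P l hz, toneRemainder_eq_integralCLM hμ l ha b hz, hline,
    hpz z (isUnit_one_sub_intervalParam_mul_const_iff.2 hz), aeval_add_smul_eq_evalScalar,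
    evalScalar_eq_sum_range hq, evalScalar_eq_sum_range hp, map_add, map_sum, map_smul, ← add_assoc]
  simp only [map_smul, ← smul_add, ← Finset.sum_add_distrib]

theorem toneFunction_taylor (hμ : μ (Icc (-1 : ℝ) 1)ᶜ = 0) {P : ℝ[X]} {l : ℕ}
    (hP : P.degree < l) (ha : a ∈ toneDomain E) (b : E) (z : ℂ) (hz : a + z • b ∈ toneDomain E) :
    toneFunction P μ l (a + z • b) =
      ∑ j ∈ Finset.range l, z ^ j •
        (j.factorial : ℝ)⁻¹ • iteratedDeriv j (fun t : ℝ => toneFunction P μ l (a + t • b)) 0 +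
      z ^ l • toneRemainder μ l a b (a + z • b) := by
  obtain ⟨c, hc⟩ := exists_toneFunction_expansion hμ hP ha b
  have hreal : (fun t : ℝ => toneFunction P μ l (a + t • b)) =ᶠ[𝓝 0] fun t =>
      ∑ j ∈ Finset.range l, t ^ j • c j + t ^ l • toneRemainder μ l a b (a + t • b) := by
    filter_upwards [eventually_mem_toneDomain ha b] with t ht
    simpa only [← Complex.ofReal_pow, Complex.coe_smul] using hc t ht
  rw [hc z hz]
  congr 1
  refine Finset.sum_congr rfl fun j hj => ?_
  rw [iteratedDeriv_eq_of_taylor_expansion (analyticAt_toneRemainder hμ l ha b) hreal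
    (Finset.mem_range.1 hj), inv_smul_smul₀ (mod_cast j.factorial_ne_zero)]

end ToneFunction

theorem semiconjBy_ringInverse_left {M₀ : Type*} [MonoidWithZero M₀] {u x y : M₀}
    (h : SemiconjBy u x y) (hu : IsUnit u) : SemiconjBy u⁻¹ʳ y x := by
  obtain ⟨u, rfl⟩ := hu
  rw [Ring.inverse_unit]
  exact h.units_inv_symm_left

theorem semiconjBy_sub_smul {R A : Type*} [CommRing R] [Ring A] [Algebra R A] {m : A}
    (hm : IsUnit m) (z : R) (b : A) : SemiconjBy (m - z • b) (m⁻¹ʳ * b) (b * m⁻¹ʳ) := by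
  rw [SemiconjBy, sub_mul, mul_sub, Ring.mul_inverse_cancel_left _ _ hm,
    Ring.inverse_mul_cancel_right _ _ hm]
  simp only [smul_mul_assoc, mul_smul_comm, mul_assoc]

theorem one_sub_smul_add_smul {R A : Type*} [CommRing R] [Ring A] [Algebra R A] (s z : R)
    (a b : A) : 1 - s • (a + z • b) = 1 - s • a - (s * z) • b := by
  rw [smul_add, smul_smul, sub_sub]

theorem isSelfAdjoint_aeval {R A : Type*} [CommRing R] [StarRing R] [TrivialStar R] [Ring A]
    [StarRing A] [Algebra R A] [StarModule R A] {y : A} (hy : IsSelfAdjoint y) (P : R[X]) :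
    IsSelfAdjoint (aeval y P) := by
  rw [aeval_eq_sum_range]
  exact isSelfAdjoint_sum _ fun i _ => (IsSelfAdjoint.all _).smul (hy.pow i)

theorem I_pow_four_mul_sub_one {k : ℕ} (hk : 1 ≤ k) : Complex.I ^ (4 * k - 1) = -Complex.I := by
  obtain ⟨k, rfl⟩ := Nat.exists_eq_add_of_le' hk
  rw [show 4 * (k + 1) - 1 = 4 * k + 3 by omega, pow_add, pow_mul, Complex.I_pow_four, one_pow,
    one_mul, Complex.I_pow_three]

section StarAlgebra

variable {A : Type*} [Ring A] [StarRing A] [Algebra ℂ A] [StarModule ℂ A]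

theorem realPart_conjugate (v x : A) : (ℜ (v * x * star v) : A) = v * ℜ x * star v := by
  simp only [realPart_apply_coe, star_mul, star_star, mul_smul_comm, smul_mul_assoc, mul_add,
    add_mul, mul_assoc]

theorem realPart_ringInverse {d : A} (hd : IsUnit d) :
    (ℜ d⁻¹ʳ : A) = d⁻¹ʳ * ℜ d * star d⁻¹ʳ := by
  have h : d⁻¹ʳ * star d * star d⁻¹ʳ = d⁻¹ʳ := by
    rw [mul_assoc, ← star_mul, Ring.inverse_mul_cancel _ hd, star_one, mul_one]
  simp only [realPart_apply_coe, mul_smul_comm, smul_mul_assoc, mul_add, add_mul, h,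
    Ring.inverse_mul_cancel _ hd, one_mul, add_comm]

theorem realPart_sub_smul {m b : A} (hm : IsSelfAdjoint m) (hb : IsSelfAdjoint b) {z : ℂ}
    (hz : z.re = 0) : (ℜ (m - z • b) : A) = m := by
  simp [realPart_smul, hz, hb.imaginaryPart, hm.coe_realPart]

theorem realPart_mul_ringInverse_sub_smul {m b : A} (hm : IsSelfAdjoint m) (hmu : IsUnit m)
    (hb : IsSelfAdjoint b) {z : ℂ} (hz : z.re = 0) (hd : IsUnit (m - z • b)) :
    (ℜ (m⁻¹ʳ * b * (m - z • b)⁻¹ʳ) : A) = (m - z • b)⁻¹ʳ * b * star (m - z • b)⁻¹ʳ := by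
  set t := m⁻¹ʳ * b
  set w := (m - z • b)⁻¹ʳ
  have hstar : star t = b * m⁻¹ʳ := by rw [star_mul, hb.star_eq, hm.ringInverse.star_eq]
  have hwt : w * star t = t * w := by
    rw [hstar]
    exact semiconjBy_ringInverse_left (semiconjBy_sub_smul hmu z b) hd
  have htw : star (t * w) = t * star w := by rw [← hwt, star_mul, star_star]
  have hw : (ℜ w : A) = w * m * star w := by
    rw [realPart_ringInverse hd, realPart_sub_smul hm hb hz]
  calc (ℜ (t * w) : A) = t * ℜ w := by
        rw [realPart_apply_coe, realPart_apply_coe, htw, mul_smul_comm, mul_add]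
    _ = t * w * m * star w := by rw [hw]; simp only [mul_assoc]
    _ = w * b * star w := by
        rw [← hwt, hstar, mul_assoc w, Ring.inverse_mul_cancel_right _ _ hmu]

theorem realPart_pow_mul_ringInverse_sub_smul {m b : A} (hm : IsSelfAdjoint m) (hmu : IsUnit m)
    (hb : IsSelfAdjoint b) {z : ℂ} (hz : z.re = 0) (hd : IsUnit (m - z • b)) (n : ℕ) :
    (ℜ ((m⁻¹ʳ * b) ^ (2 * n + 1) * (m - z • b)⁻¹ʳ) : A) =
      (m⁻¹ʳ * b) ^ n * (m - z • b)⁻¹ʳ * b * star ((m⁻¹ʳ * b) ^ n * (m - z • b)⁻¹ʳ) := by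
  set t := m⁻¹ʳ * b
  set w := (m - z • b)⁻¹ʳ
  have hstar : star (t ^ n) = (b * m⁻¹ʳ) ^ n := by
    rw [star_pow, star_mul, hb.star_eq, hm.ringInverse.star_eq]
  have hpow : w * star (t ^ n) = t ^ n * w := by
    rw [hstar]
    exact (semiconjBy_ringInverse_left (semiconjBy_sub_smul hmu z b) hd).pow_right n
  have hsplit : t ^ (2 * n + 1) * w = t ^ n * (t * w) * star (t ^ n) := by
    rw [mul_assoc, mul_assoc t, hpow]
    simp only [← mul_assoc, ← pow_succ, ← pow_add]
    ring_nf
  rw [hsplit, realPart_conjugate, realPart_mul_ringInverse_sub_smul hm hmu hb hz hd, star_mul]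
  simp only [w, mul_assoc]

theorem imaginaryPart_sum_I_pow_smul {c : ℕ → A} (hc : ∀ j, IsSelfAdjoint (c j)) (n : ℕ) :
    (ℑ (∑ j ∈ Finset.range (2 * n + 1), Complex.I ^ j • c j) : A) =
      ∑ m ∈ Finset.Icc 1 n, (-1 : ℝ) ^ (m - 1) • c (2 * m - 1) := by
  induction n with
  | zero => simp [(hc 0).imaginaryPart]
  | succ n ih =>
    have hodd : Complex.I ^ (2 * n + 1) = ((-1 : ℝ) ^ n : ℝ) * Complex.I := by
      rw [pow_succ, pow_mul, Complex.I_sq]; simp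
    have heven : Complex.I ^ (2 * n + 2) = ((-1 : ℝ) ^ (n + 1) : ℝ) := by
      rw [← mul_add_one, pow_mul, Complex.I_sq]; simp
    rw [show 2 * (n + 1) + 1 = 2 * n + 1 + 1 + 1 by ring, Finset.sum_range_succ,
      Finset.sum_range_succ, Finset.sum_Icc_succ_top (by omega), map_add, map_add,
      AddSubgroup.coe_add, AddSubgroup.coe_add, ih, hodd, heven]
    simp only [imaginaryPart_smul, (hc _).imaginaryPart]
    simp only [Complex.ofReal_re, Complex.ofReal_im, Complex.re_ofReal_mul, Complex.im_ofReal_mul,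
      Complex.I_re, Complex.I_im, smul_zero, zero_smul, mul_one, zero_add, add_zero,
      ZeroMemClass.coe_zero, selfAdjoint.val_smul, (hc _).coe_realPart]
    rfl

end StarAlgebra

section CStarAlgebra

variable {𝒜 : Type*} [CStarAlgebra 𝒜]

theorem norm_lt_one_of_spectrum_subset {a : 𝒜} (ha : IsSelfAdjoint a)
    (h : spectrum ℂ a ⊆ (fun x : ℝ => (x : ℂ)) '' Ioo (-1 : ℝ) 1) : ‖a‖ < 1 := by
  rw [← cfc_id ℂ a ha.isStarNormal]
  refine norm_cfc_lt one_pos fun x hx => ?_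
  obtain ⟨r, hr, rfl⟩ := h hx
  simpa [abs_lt] using hr

theorem norm_ofReal_smul_lt_one {E : Type*} [SeminormedAddCommGroup E] [NormedSpace ℂ E] {x : E}
    (hx : ‖x‖ < 1) {s : ℝ} (hs : s ∈ Icc (-1 : ℝ) 1) : ‖(s : ℂ) • x‖ < 1 := by
  rw [norm_smul, Complex.norm_real]
  exact (mul_le_of_le_one_left (norm_nonneg x) (abs_le.2 hs)).trans_lt hx

theorem mem_toneDomain_of_norm_lt_one {E : Type*} [NormedRing E] [NormedAlgebra ℂ E]
    [CompleteSpace E] {y : E} (hy : ‖y‖ < 1) : y ∈ toneDomain E := fun _ hs =>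
  isUnit_one_sub_of_norm_lt_one (norm_ofReal_smul_lt_one hy hs)

theorem isUnit_one_sub_I_smul {h : 𝒜} (hh : IsSelfAdjoint h) : IsUnit (1 - Complex.I • h) := by
  have hI : -Complex.I ∉ spectrum ℂ h := fun hmem => by
    simpa using congrArg Complex.im (hh.mem_spectrum_eq_re hmem)
  rw [spectrum.notMem_iff, Algebra.algebraMap_eq_smul_one] at hI
  have := hI.smul (Units.mk0 Complex.I Complex.I_ne_zero)
  rwa [Units.smul_mk0, smul_sub, smul_smul, mul_neg, Complex.I_mul_I, neg_neg, one_smul] at this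

theorem realPart_integral {f : ℝ → 𝒜} {μ : Measure ℝ} (hf : Integrable f μ) :
    (ℜ (∫ s, f s ∂μ) : 𝒜) = ∫ s, (ℜ (f s) : 𝒜) ∂μ := by
  let L : 𝒜 →L[ℝ] 𝒜 := (2 : ℝ)⁻¹ • (.id ℝ 𝒜 + (starL' ℝ : 𝒜 ≃L[ℝ] 𝒜).toContinuousLinearMap)
  have hL (x : 𝒜) : L x = ℜ x := by simp [L, realPart_apply_coe]
  simpa only [hL] using (L.integral_comp_comm hf).symm

theorem isSelfAdjoint_toneFunction {y : 𝒜} (hy : IsSelfAdjoint y) (P : ℝ[X]) (μ : Measure ℝ)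
    (l : ℕ) :
    IsSelfAdjoint (toneFunction P μ l y) := by
  refine .add ?_ ?_
  · change IsSelfAdjoint (aeval y (P.map (algebraMap ℝ ℂ)))
    rw [aeval_map_algebraMap]
    exact isSelfAdjoint_aeval hy P
  have hs (s : ℝ) : IsSelfAdjoint (y ^ l * (1 - (s : ℂ) • y)⁻¹ʳ) := by
    have hres : IsSelfAdjoint (1 - (s : ℂ) • y) := by
      rw [Complex.coe_smul]
      exact (IsSelfAdjoint.one _).sub ((IsSelfAdjoint.all s).smul hy)
    refine ((hy.pow l).commute_iff hres.ringInverse).1 (commute_ringInverse_right ?_)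
    exact ((Commute.one_right y).sub_right ((Commute.refl y).smul_right _)).pow_left l
  rw [isSelfAdjoint_iff]
  calc star (∫ s, y ^ l * (1 - (s : ℂ) • y)⁻¹ʳ ∂μ)
      = ∫ s, star (y ^ l * (1 - (s : ℂ) • y)⁻¹ʳ) ∂μ :=
        ((starL' ℝ : 𝒜 ≃L[ℝ] 𝒜).integral_comp_comm _).symm
    _ = _ := by simp only [(hs _).star_eq]

variable [PartialOrder 𝒜] [StarOrderedRing 𝒜]

theorem isUnit_sub_I_smul {m h : 𝒜} (hm : IsStrictlyPositive m)
    (hh : IsSelfAdjoint h) : IsUnit (m - Complex.I • h) := by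
  obtain ⟨c, hcu, hc, rfl⟩ :=
    CStarAlgebra.isStrictlyPositive_iff_exists_isUnit_and_isSelfAdjoint_and_eq_mul_self.1 hm
  have hconj : c * c - Complex.I • h = c * (1 - Complex.I • (c⁻¹ʳ * h * c⁻¹ʳ)) * c := by
    rw [mul_sub, sub_mul, mul_one, mul_smul_comm, smul_mul_assoc, mul_assoc c,
      Ring.inverse_mul_cancel_right _ _ hcu, Ring.mul_inverse_cancel_left _ _ hcu]
  rw [hconj]
  refine (hcu.mul (isUnit_one_sub_I_smul ?_)).mul hcu
  simpa only [hc.ringInverse.star_eq] using hh.conjugate (c⁻¹ʳ)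

theorem isStrictlyPositive_one_sub {x : 𝒜} (hx : IsSelfAdjoint x) (h : ‖x‖ < 1) :
    IsStrictlyPositive (1 - x) := by
  refine (isUnit_one_sub_of_norm_lt_one h).isStrictlyPositive (sub_nonneg.2 ?_)
  calc x ≤ algebraMap ℝ 𝒜 ‖x‖ := hx.le_algebraMap_norm_self
    _ ≤ algebraMap ℝ 𝒜 1 := algebraMap_mono 𝒜 h.le
    _ = 1 := map_one _

variable {a b : 𝒜}

theorem isStrictlyPositive_one_sub_smul (ha : IsSelfAdjoint a) (ha1 : ‖a‖ < 1) {s : ℝ}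
    (hs : s ∈ Icc (-1 : ℝ) 1) : IsStrictlyPositive (1 - (s : ℂ) • a) := by
  refine isStrictlyPositive_one_sub ?_ (norm_ofReal_smul_lt_one ha1 hs)
  rw [Complex.coe_smul]
  exact (IsSelfAdjoint.all s).smul ha

theorem add_I_smul_mem_toneDomain (ha : IsSelfAdjoint a) (ha1 : ‖a‖ < 1) (hb : IsSelfAdjoint b) :
    a + Complex.I • b ∈ toneDomain 𝒜 := by
  intro s hs
  rw [one_sub_smul_add_smul, mul_comm, mul_smul, Complex.coe_smul s b]
  exact isUnit_sub_I_smul (isStrictlyPositive_one_sub_smul ha ha1 hs)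
    ((IsSelfAdjoint.all s).smul hb)

variable {μ : Measure ℝ}

theorem realPart_toneRemainder_nonneg [IsFiniteMeasure μ] (hμ : μ (Icc (-1 : ℝ) 1)ᶜ = 0)
    (ha : IsSelfAdjoint a) (ha1 : ‖a‖ < 1) (hb : 0 ≤ b) (n : ℕ) :
    0 ≤ (ℜ (toneRemainder μ (2 * n + 1) a b (a + Complex.I • b)) : 𝒜) := by
  have hy := add_I_smul_mem_toneDomain ha ha1 hb.isSelfAdjoint
  rw [toneRemainder, realPart_integral
    (integrable_ringInverse_mul_pow_mul_ringInverse hμ _ (mem_toneDomain_of_norm_lt_one ha1) b hy)]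
  refine integral_nonneg_of_ae ?_
  filter_upwards [mem_ae_iff.2 hμ] with s hs
  have hm := isStrictlyPositive_one_sub_smul ha ha1 hs
  have hd := hy s hs
  rw [one_sub_smul_add_smul] at hd ⊢
  rw [realPart_pow_mul_ringInverse_sub_smul hm.isSelfAdjoint hm.isUnit hb.isSelfAdjoint (by simp)
    hd]
  exact star_right_conjugate_nonneg hb _

theorem imaginaryPart_toneFunction_le [IsFiniteMeasure μ] (hμ : μ (Icc (-1 : ℝ) 1)ᶜ = 0)
    {k : ℕ} (hk : 1 ≤ k) {P : ℝ[X]} (hP : P.degree < (4 * k - 1 : ℕ))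
    (ha : IsSelfAdjoint a) (ha1 : ‖a‖ < 1) (hb : 0 ≤ b) :
    (ℑ (toneFunction P μ (4 * k - 1) (a + Complex.I • b)) : 𝒜) ≤
      ∑ m ∈ Finset.Icc 1 (2 * k - 1), ((-1 : ℝ) ^ (m - 1) / (2 * m - 1).factorial) •
        iteratedDeriv (2 * m - 1) (fun t : ℝ => toneFunction P μ (4 * k - 1) (a + t • b)) 0 := by
  have hsa := hb.isSelfAdjoint
  have hl : 4 * k - 1 = 2 * (2 * k - 1) + 1 := by omega
  set D := fun j => iteratedDeriv j (fun t : ℝ => toneFunction P μ (4 * k - 1) (a + t • b)) 0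
  have hD (j : ℕ) : IsSelfAdjoint ((j.factorial : ℝ)⁻¹ • D j) :=
    (IsSelfAdjoint.all _).smul (isSelfAdjoint_iteratedDeriv
      (fun t => isSelfAdjoint_toneFunction (ha.add ((IsSelfAdjoint.all t).smul hsa)) P μ _) j 0)
  have hR := realPart_toneRemainder_nonneg hμ ha ha1 hb (2 * k - 1)
  rw [← hl] at hR
  calc (ℑ (toneFunction P μ (4 * k - 1) (a + Complex.I • b)) : 𝒜)
      = ∑ m ∈ Finset.Icc 1 (2 * k - 1),
          (-1 : ℝ) ^ (m - 1) • ((2 * m - 1).factorial : ℝ)⁻¹ • D (2 * m - 1) -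
        ℜ (toneRemainder μ (4 * k - 1) a b (a + Complex.I • b)) := by
        rw [toneFunction_taylor hμ hP (mem_toneDomain_of_norm_lt_one ha1) b Complex.I
          (add_I_smul_mem_toneDomain ha ha1 hsa), map_add, AddSubgroup.coe_add,
          I_pow_four_mul_sub_one hk, neg_smul, map_neg, imaginaryPart_I_smul,
          AddSubgroup.coe_neg, ← sub_eq_add_neg, ← imaginaryPart_sum_I_pow_smul hD, ← hl]
    _ ≤ _ := by
        simp only [smul_smul, ← div_eq_mul_inv]
        exact sub_le_self _ hR

theorem stmt11_general {k : ℕ} (hk : 1 ≤ k) {P : ℝ[X]} (hP : P.degree < (4 * k - 1 : ℕ))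
    [IsFiniteMeasure μ] (hμ : μ (Icc (-1 : ℝ) 1)ᶜ = 0) (ha : IsSelfAdjoint a)
    (hspa : spectrum ℂ a ⊆ (fun x : ℝ => (x : ℂ)) '' Ioo (-1 : ℝ) 1) (hb : 0 ≤ b) :
    (∀ s ∈ Icc (-1 : ℝ) 1, IsUnit (1 - (s : ℂ) • (a + Complex.I • b))) ∧
    (∃ δ > (0 : ℝ), ∀ t : ℝ, |t| < δ →
      ∀ s ∈ Icc (-1 : ℝ) 1, IsUnit (1 - (s : ℂ) • (a + t • b))) ∧
    Integrable (fun s : ℝ =>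
      (a + Complex.I • b) ^ (4 * k - 1) * (1 - (s : ℂ) • (a + Complex.I • b))⁻¹ʳ) μ ∧
    (∃ δ > (0 : ℝ), ∀ t : ℝ, |t| < δ →
      Integrable (fun s : ℝ => (a + t • b) ^ (4 * k - 1) * (1 - (s : ℂ) • (a + t • b))⁻¹ʳ) μ) ∧
    (ℑ (toneFunction P μ (4 * k - 1) (a + Complex.I • b)) : 𝒜) ≤
      ∑ m ∈ Finset.Icc 1 (2 * k - 1), ((-1 : ℝ) ^ (m - 1) / (2 * m - 1).factorial) •
        iteratedDeriv (2 * m - 1) (fun t : ℝ => toneFunction P μ (4 * k - 1) (a + t • b)) 0 := by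
  have ha1 := norm_lt_one_of_spectrum_subset ha hspa
  have hx := add_I_smul_mem_toneDomain ha ha1 hb.isSelfAdjoint
  obtain ⟨δ, hδ, hline⟩ := Metric.eventually_nhds_iff.1
    (eventually_mem_toneDomain (mem_toneDomain_of_norm_lt_one ha1) b)
  simp only [dist_zero_right, Real.norm_eq_abs] at hline
  exact ⟨hx, ⟨δ, hδ, hline⟩, integrable_pow_mul_ringInverse hμ _ hx,
    ⟨δ, hδ, fun t ht => integrable_pow_mul_ringInverse hμ _ (hline ht)⟩,
    imaginaryPart_toneFunction_le hμ hk hP ha ha1 hb⟩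

end CStarAlgebra

theorem opIm_eq_imaginaryPart (Y : H →L[ℂ] H) : opIm Y = ℑ Y := by
  rw [opIm, imaginaryPart_apply_coe, ← Complex.coe_smul, smul_smul]
  congr 1
  simp [mul_comm]

/-- The `(4k−1)`-tone case of the main theorem: for `f(Y) = P(Y) + ∫ Y^{4k−1}(I−λY)⁻¹ dμ(λ)`
with `deg P < 4k−1` and `μ` a finite positive measure on `[−1,1]`, all the relevant operators
are invertible, the Bochner integrals exist, and, for `X = A + iB` with `B ≥ 0`,
`Im f(X) ≤ Σ_{m=1}^{2k−1} ((−1)^{m−1}/(2m−1)!) D^{2m−1}f(A;B)`. -/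
theorem stmt11 [TopologicalSpace.SeparableSpace H] (hinf : ¬ FiniteDimensional ℂ H)
    (k : ℕ) (hk : 1 ≤ k) (P : Polynomial ℝ) (hP : P.degree < ((4 * k - 1 : ℕ) : WithBot ℕ))
    (μ : Measure ℝ) [IsFiniteMeasure μ] (hμ : μ (Set.Icc (-1 : ℝ) 1)ᶜ = 0)
    (A B X : H →L[ℂ] H) (hA : IsSelfAdjoint A) (hB : IsSelfAdjoint B)
    (hBpos : B.IsPositive)
    (hspA : spectrum ℂ A ⊆ (fun x : ℝ => (x : ℂ)) '' Set.Ioo (-1 : ℝ) 1)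
    (hX : X = A + Complex.I • B) :
    (∀ s ∈ Set.Icc (-1 : ℝ) 1, IsUnit (1 - (s : ℂ) • X)) ∧
    (∃ δ > (0 : ℝ), ∀ t : ℝ, |t| < δ →
        ∀ s ∈ Set.Icc (-1 : ℝ) 1, IsUnit (1 - (s : ℂ) • (A + t • B))) ∧
    Integrable (fun s : ℝ => X ^ (4 * k - 1) * Ring.inverse (1 - (s : ℂ) • X)) μ ∧
    (∃ δ > (0 : ℝ), ∀ t : ℝ, |t| < δ →
        Integrable
          (fun s : ℝ =>
            (A + t • B) ^ (4 * k - 1) * Ring.inverse (1 - (s : ℂ) • (A + t • B))) μ) ∧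
    ((∑ m ∈ Finset.Icc 1 (2 * k - 1),
        ((-1 : ℝ) ^ (m - 1) / (Nat.factorial (2 * m - 1) : ℝ)) •
          iteratedDeriv (2 * m - 1)
            (fun t : ℝ => fcal P μ (4 * k - 1) (A + t • B)) 0)
      - opIm (fcal P μ (4 * k - 1) X)).IsPositive := by
  subst hX
  simp only [opIm_eq_imaginaryPart]
  exact stmt11_general hk hP hμ hA hspA ((nonneg_iff_isPositive _).2 hBpos)
end

section
/- Let X = A + iB, where A and B are bounded self-adjoint operators on H and A is positive and invertible, and let λ ≥ 0. Then X + λI is invertible, (X + λI)^{-1} = (A + λI)^{-1/2}(I + C_λ²)^{-1}(I − iC_λ)(A + λI)^{-1/2} where C_λ := (A + λI)^{-1/2} B (A + λI)^{-1/2}, and Re{(X + λI)^{-1}} = (A + λI)^{-1/2}(I + C_λ²)^{-1}(A + λI)^{-1/2}, which is positive and invertible. -/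
open ContinuousLinearMap MeasureTheory

variable {H : Type*} [NormedAddCommGroup H] [InnerProductSpace ℂ H] [CompleteSpace H]

/-- The real part `(Y + Y*)/2` of a bounded operator. -/
noncomputable def opRe (Y : H →L[ℂ] H) : H →L[ℂ] H := (2 : ℂ)⁻¹ • (Y + star Y)

/-- The inverse square root `T^{-1/2}` of a (positive invertible) operator, via the
continuous functional calculus. -/
noncomputable def invSqrt (T : H →L[ℂ] H) : H →L[ℂ] H := cfc (fun x : ℝ => (Real.sqrt x)⁻¹) T

/-!
Conjugating `A + iB` by `S = A^{-1/2}` gives `S (A + iB) S = 1 + iC` with `C = S B S` self-adjoint,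
so `(A + iB)⁻¹ = S (1 + iC)⁻¹ S`. Everything then reduces to `1 + iC`, which is invertible because
`(1 + iC)(1 - iC) = 1 + C²` is. The real part comes from the identity
`Re a⁻¹ = a⁻¹ (Re a) (a*)⁻¹`, which at `a = 1 + iC` reads
`Re (1 + iC)⁻¹ = (1 + iC)⁻¹ (1 - iC)⁻¹ = (1 + C²)⁻¹`. The case of `X + λ` follows by replacing `A`
with `A + λ`.
-/

section Algebra

open scoped Ring

theorem ringInverse_eq_mul_ringInverse_mul {M : Type*} [MonoidWithZero M] {s t : M}
    (hs : IsUnit s) (ht : IsUnit t) (a : M) : a⁻¹ʳ = t * (s * a * t)⁻¹ʳ * s := by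
  rw [Ring.inverse_mul (.inr ht), Ring.inverse_mul (.inl hs), ← mul_assoc, ← mul_assoc,
    Ring.mul_inverse_cancel t ht, one_mul, mul_assoc, Ring.inverse_mul_cancel s hs, mul_one]

variable {R : Type*} [Ring R] [Algebra ℂ R]

theorem one_add_I_smul_mul_one_sub_I_smul (c : R) :
    (1 + Complex.I • c) * (1 - Complex.I • c) = 1 + c ^ 2 := by
  rw [← (Commute.one_left _).sq_sub_sq, smul_pow, Complex.I_sq, one_pow, neg_one_smul,
    sub_neg_eq_add]

theorem one_sub_I_smul_mul_one_add_I_smul (c : R) :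
    (1 - Complex.I • c) * (1 + Complex.I • c) = 1 + c ^ 2 := by
  simpa only [smul_neg, ← sub_eq_add_neg, sub_neg_eq_add, neg_sq]
    using one_add_I_smul_mul_one_sub_I_smul (-c)

theorem isUnit_one_add_I_smul {c : R} (h : IsUnit (1 + c ^ 2)) : IsUnit (1 + Complex.I • c) := by
  have hcomm : Commute (1 + Complex.I • c) (1 - Complex.I • c) :=
    (one_add_I_smul_mul_one_sub_I_smul c).trans (one_sub_I_smul_mul_one_add_I_smul c).symm
  rw [← one_add_I_smul_mul_one_sub_I_smul, hcomm.isUnit_mul_iff] at h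
  exact h.1

theorem ringInverse_one_add_I_smul {c : R} (h : IsUnit (1 + c ^ 2)) :
    (1 + Complex.I • c)⁻¹ʳ = (1 + c ^ 2)⁻¹ʳ * (1 - Complex.I • c) := by
  symm
  rw [Ring.inverse_mul_eq_iff_eq_mul _ _ _ h, ← one_sub_I_smul_mul_one_add_I_smul,
    Ring.mul_inverse_cancel_right _ _ (isUnit_one_add_I_smul h)]

end Algebra

section RealPart

open scoped Ring ComplexStarModule

theorem realPart_add_I_smul {V : Type*} [AddCommGroup V] [StarAddMonoid V] [Module ℂ V]
    [StarModule ℂ V] {a b : V} (ha : IsSelfAdjoint a) (hb : IsSelfAdjoint b) :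
    (ℜ (a + Complex.I • b) : V) = a := by
  rw [map_add, realPart_I_smul, hb.imaginaryPart, neg_zero, add_zero, ha.coe_realPart]

theorem realPart_star_left_conjugate {R : Type*} [NonUnitalRing R] [StarRing R] [Module ℂ R]
    [IsScalarTower ℂ R R] [SMulCommClass ℂ R R] [StarModule ℂ R] (s a : R) :
    (ℜ (star s * a * s) : R) = star s * ℜ a * s := by
  simp only [realPart_apply_coe, star_mul, star_star, mul_smul_comm, smul_mul_assoc, mul_add,
    add_mul, mul_assoc]

variable {R : Type*} [Ring R] [StarRing R] [Algebra ℂ R] [StarModule ℂ R]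

theorem realPart_ringInverse_s16 (a : R) : (ℜ a⁻¹ʳ : R) = a⁻¹ʳ * ℜ a * (star a)⁻¹ʳ := by
  rw [realPart_apply_coe, realPart_apply_coe, ← Ring.inverse_star,
    Ring.inverse_add_inverse isUnit_star.symm, mul_smul_comm, smul_mul_assoc]

theorem realPart_ringInverse_one_add_I_smul {c : R} (hc : IsSelfAdjoint c)
    (h : IsUnit (1 + c ^ 2)) : (ℜ (1 + Complex.I • c)⁻¹ʳ : R) = (1 + c ^ 2)⁻¹ʳ := by
  have hstar : star (1 + Complex.I • c) = 1 - Complex.I • c := by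
    simp only [star_add, star_one, star_smul, hc.star_eq, Complex.star_def, Complex.conj_I,
      neg_smul, sub_eq_add_neg]
  rw [realPart_ringInverse_s16, realPart_add_I_smul (.one R) hc, mul_one, hstar,
    ← Ring.inverse_mul (.inr (isUnit_one_add_I_smul h)), one_sub_I_smul_mul_one_add_I_smul]

end RealPart

section CStarAlgebra

open scoped Ring ComplexStarModule

variable {E : Type*} [CStarAlgebra E] [PartialOrder E] [StarOrderedRing E]

theorem isStrictlyPositive_one_add_sq {c : E} (hc : IsSelfAdjoint c) :
    IsStrictlyPositive (1 + c ^ 2) :=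
  isStrictlyPositive_one.add_nonneg hc.sq_nonneg

theorem isStrictlyPositive_add_smul_one {a : E} (ha : IsStrictlyPositive a) {l : ℝ} (hl : 0 ≤ l) :
    IsStrictlyPositive (a + (l : ℂ) • 1) := by
  rw [Complex.coe_smul]
  exact ha.add_nonneg (smul_nonneg hl zero_le_one)

theorem rpow_neg_one_half_eq_cfc {a : E} (ha : 0 ≤ a) :
    a ^ (-(1 / 2) : ℝ) = cfc (fun x : ℝ => (Real.sqrt x)⁻¹) a := by
  rw [CFC.rpow_eq_cfc_real ha]
  refine cfc_congr fun x hx => ?_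
  simp only [Real.rpow_neg (spectrum_nonneg_of_nonneg ha hx), Real.sqrt_eq_rpow]

theorem stmt16_general {A B S C : E} (hA : IsStrictlyPositive A) (hB : IsSelfAdjoint B)
    (hS : S = A ^ (-(1 / 2) : ℝ)) (hC : C = S * B * S) :
    IsUnit (A + Complex.I • B) ∧
    (A + Complex.I • B)⁻¹ʳ = S * (1 + C ^ 2)⁻¹ʳ * (1 - Complex.I • C) * S ∧
    (ℜ (A + Complex.I • B)⁻¹ʳ : E) = S * (1 + C ^ 2)⁻¹ʳ * S ∧
    IsStrictlyPositive (S * (1 + C ^ 2)⁻¹ʳ * S) := by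
  have hSpos : IsStrictlyPositive S := hS ▸ hA.rpow A _
  have hSsa : IsSelfAdjoint S := hSpos.isSelfAdjoint
  have hCsa : IsSelfAdjoint C := hC ▸ hB.conjugate_self hSsa
  have hD : IsStrictlyPositive (1 + C ^ 2) := isStrictlyPositive_one_add_sq hCsa
  have hfactor : S * (A + Complex.I • B) * S = 1 + Complex.I • C := by
    rw [mul_add, add_mul, mul_smul_comm, smul_mul_assoc, ← hC, hS,
      CFC.conjugate_rpow_neg_one_half A hA]
  have hinv : (A + Complex.I • B)⁻¹ʳ = S * (1 + Complex.I • C)⁻¹ʳ * S := by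
    rw [ringInverse_eq_mul_ringInverse_mul hSpos.isUnit hSpos.isUnit, hfactor]
  refine ⟨?_, ?_, ?_, hD.ringInverse.conjugate_of_isUnit_of_isSelfAdjoint _ _ hSpos.isUnit hSsa⟩
  · rw [← isUnit_ringInverse, hinv]
    exact (hSpos.isUnit.mul (isUnit_one_add_I_smul hD.isUnit).ringInverse).mul hSpos.isUnit
  · rw [hinv, ringInverse_one_add_I_smul hD.isUnit, ← mul_assoc]
  · have hconj := realPart_star_left_conjugate S (1 + Complex.I • C)⁻¹ʳ
    rwa [hSsa.star_eq, ← hinv, realPart_ringInverse_one_add_I_smul hCsa hD.isUnit] at hconj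

end CStarAlgebra

section Operators

open scoped ComplexStarModule

theorem opRe_eq_realPart (Y : H →L[ℂ] H) : opRe Y = ℜ Y := by
  rw [opRe, realPart_apply_coe, ← Complex.coe_smul, Complex.ofReal_inv, Complex.ofReal_ofNat]

theorem invSqrt_eq_rpow {T : H →L[ℂ] H} (hT : 0 ≤ T) : invSqrt T = T ^ (-(1 / 2) : ℝ) :=
  (rpow_neg_one_half_eq_cfc hT).symm

end Operators

/-- For `X = A + iB` with `A` positive and invertible and `λ ≥ 0`: `X + λI` is invertible,
`(X+λI)⁻¹ = (A+λI)^{-1/2}(I+C_λ²)⁻¹(I−iC_λ)(A+λI)^{-1/2}` with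
`C_λ = (A+λI)^{-1/2} B (A+λI)^{-1/2}`, and
`Re (X+λI)⁻¹ = (A+λI)^{-1/2}(I+C_λ²)⁻¹(A+λI)^{-1/2}`, which is positive and invertible. -/
theorem stmt16 [TopologicalSpace.SeparableSpace H] (hinf : ¬ FiniteDimensional ℂ H)
    (l : ℝ) (hl : 0 ≤ l)
    (A B X S C : H →L[ℂ] H) (hA : IsSelfAdjoint A) (hB : IsSelfAdjoint B)
    (hApos : A.IsPositive) (hAU : IsUnit A)
    (hX : X = A + Complex.I • B)
    (hS : S = invSqrt (A + (l : ℂ) • 1)) (hC : C = S * B * S) :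
    IsUnit (X + (l : ℂ) • 1) ∧
    Ring.inverse (X + (l : ℂ) • 1) =
      S * Ring.inverse (1 + C ^ 2) * (1 - Complex.I • C) * S ∧
    opRe (Ring.inverse (X + (l : ℂ) • 1)) = S * Ring.inverse (1 + C ^ 2) * S ∧
    (S * Ring.inverse (1 + C ^ 2) * S).IsPositive ∧
    IsUnit (S * Ring.inverse (1 + C ^ 2) * S) := by
  have hT := isStrictlyPositive_add_smul_one
    (hAU.isStrictlyPositive ((nonneg_iff_isPositive A).2 hApos)) hl
  rw [hX, add_right_comm, opRe_eq_realPart, ← nonneg_iff_isPositive]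
  exact stmt16_general hT hB (hS.trans (invSqrt_eq_rpow hT.nonneg)) hC
end
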